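/- For every β > 1 there exists β′ with 1 < β′ < 2 such that the beta-shifts X_β and X_{β′} are flow equivalent. -/

import Mathlib

/-!
Let `g` be the quasi-greedy expansion of `1` in base `β`. By Parry, `X_β` consists of the sequences
all of whose tails are lexicographically at most `g`, and `g` is the greatest of its own tails. The
substitution `j ↦ 1^j 0` preserves the lexicographic order, so it carries `X_β` onto the sequences
whose tails are at most the image `g' = 1^{g 0} 0 1^{g 1} 0 ⋯` of `g`, which again is the greatest
of its own tails. As `g'` has digits in `{0, 1}` and contains a `0`, it is an expansion of `1` in a
base `β' < 2`, and the image of `X_β` is `X_{β'}`.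

On the other hand, replacing every letter `j` by `1^j 0` is a flow equivalence: symbol expansions
lead to the substitution `j ↦ (j, 0) (j, 1) ⋯ (j, j)` with pairwise distinct new letters, and
relabelling these letters to `1^j 0` is a conjugacy because the zeros mark the ends of the blocks.
-/

namespace SymbolicDynamics

/-! ### Basic symbolic dynamics set-up

All shift spaces are realized inside the full shift over the countable ambient
alphabet `ℕ`; an actual shift space uses only a finite subset of `ℕ` as its
alphabet.  This gives a uniform setting in which shift spaces over varying
finite alphabets can be compared (as required by flow equivalence). -/

/-- Biinfinite sequences over the ambient alphabet `ℕ`. -/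
abbrev Seq : Type := ℤ → ℕ

/-- The shift map `σ`, `(σ x) i = x (i+1)`. -/
def shift (x : Seq) : Seq := fun i => x (i + 1)

/-- The word `x_i x_{i+1} ⋯ x_{i+n-1}` of length `n` occurring in `x` at position `i`. -/
def wordAt (x : Seq) (i : ℤ) (n : ℕ) : List ℕ :=
  List.ofFn fun k : Fin n => x (i + (k.val : ℤ))

/-- `w` occurs as a factor of the biinfinite sequence `x`. -/
def FactorOf (w : List ℕ) (x : Seq) : Prop := ∃ i : ℤ, wordAt x i w.length = w

/-- The language `B(X)`: all finite words occurring in points of `X`. -/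
def lang (X : Set Seq) : Set (List ℕ) := {w | ∃ x ∈ X, FactorOf w x}

/-- `X_F`: the set of biinfinite sequences containing no word of `F` as a factor. -/
def XF (F : Set (List ℕ)) : Set Seq := {x | ∀ w ∈ F, ¬ FactorOf w x}

/-- `X` is a shift space over the finite alphabet `A ⊆ ℕ`: `X` is a closed,
shift-invariant set of biinfinite sequences with letters in `A`. -/
def IsSubshift (A : Set ℕ) (X : Set Seq) : Prop :=
  A.Finite ∧ IsClosed X ∧ (∀ x, x ∈ X ↔ shift x ∈ X) ∧ ∀ x ∈ X, ∀ i, x i ∈ A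

/-- `X` is a shift space (over some finite alphabet). -/
def IsShiftSpace (X : Set Seq) : Prop := ∃ A : Set ℕ, IsSubshift A X

/-- A conjugacy between `X` and `Y`: a shift-commuting homeomorphism. -/
def Conjugate (X Y : Set Seq) : Prop :=
  ∃ φ : ↥X ≃ₜ ↥Y, ∀ x y : ↥X, shift x.1 = y.1 → shift (φ x).1 = (φ y).1

/-- The (globally defined) map `φ` restricts to a conjugacy from `X` onto `Y`:
there is a shift-commuting homeomorphism `X → Y` whose underlying map is `φ`. -/
def ConjugacyVia (φ : Seq → Seq) (X Y : Set Seq) : Prop :=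
  ∃ h : ↥X ≃ₜ ↥Y, (∀ x : ↥X, (h x).1 = φ x.1) ∧
    ∀ x y : ↥X, shift x.1 = y.1 → shift (h x).1 = (h y).1

/-- `y` is obtained from `x` by replacing every occurrence of the letter `a` by
`a ◇` (with `◇ = d`), possibly followed by one shift.  The reindexing function
`p` records the position in `y` of the `k`-th letter of `x`. -/
def ExpandsTo (a d : ℕ) (x y : Seq) : Prop :=
  ∃ p : ℤ → ℤ, (p 0 = 0 ∨ p 0 = -1) ∧
    (∀ k, p (k + 1) = p k + if x k = a then 2 else 1) ∧
    (∀ k, y (p k) = x k) ∧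
    ∀ k, x k = a → y (p k + 1) = d

/-- The symbol expansion `X^{a ↦ a◇}` with `◇ = d` (a symbol not in the alphabet
of `X`): all sequences obtained from points of `X` by replacing every
occurrence of `a` by `a◇`, together with all shifts of such sequences. -/
def symbolExpansion (X : Set Seq) (a d : ℕ) : Set Seq := {y | ∃ x ∈ X, ExpandsTo a d x y}

/-- Flow equivalence: the smallest equivalence relation on shift spaces (over
varying finite alphabets) containing conjugacy and relating every shift space
`X` to its symbol expansion `X^{a ↦ a◇}` for every letter `a` of the alphabet of
`X` and every new symbol `◇` (Parry–Sullivan). -/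
inductive FlowEquiv : Set Seq → Set Seq → Prop
  | of_conjugate {X Y : Set Seq} (hX : IsShiftSpace X) (hY : IsShiftSpace Y)
      (h : Conjugate X Y) : FlowEquiv X Y
  | expand {X : Set Seq} {A : Set ℕ} (a d : ℕ) (hX : IsSubshift A X)
      (ha : a ∈ A) (hd : d ∉ A) : FlowEquiv X (symbolExpansion X a d)
  | symm {X Y : Set Seq} : FlowEquiv X Y → FlowEquiv Y X
  | trans {X Y Z : Set Seq} : FlowEquiv X Y → FlowEquiv Y Z → FlowEquiv X Z

/-- The full shift on `k` symbols (realized on the alphabet `{0, …, k-1}`). -/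
def fullShift (k : ℕ) : Set Seq := {x | ∀ i, x i < k}

/-- `X` is a shift of finite type. -/
def IsSFT (X : Set Seq) : Prop := ∃ F : Set (List ℕ), F.Finite ∧ X = XF F

/-- `X` is an `n`-step shift of finite type:  `X = X_F` for a finite set `F` of
forbidden words of length `n+1`. -/
def IsNStepSFT (X : Set Seq) (n : ℕ) : Prop :=
  ∃ F : Set (List ℕ), F.Finite ∧ (∀ w ∈ F, w.length = n + 1) ∧ X = XF F

/-- Irreducibility of a shift space. -/
def IsIrreducibleShift (X : Set Seq) : Prop :=
  ∀ u ∈ lang X, ∀ w ∈ lang X, ∃ v ∈ lang X, u ++ v ++ w ∈ lang X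

/-! ### Beta-shifts -/

/-- `betaR β t n` is `rₙ(t)`: `r₀(t) = t`, `r_{n+1}(t) = frac (β · rₙ(t))`. -/
noncomputable def betaR (β t : ℝ) : ℕ → ℝ
  | 0 => t
  | n + 1 => Int.fract (β * betaR β t n)

/-- `betaDigit β t n` is the digit `x_{n+1}(t) = ⌊β · rₙ(t)⌋` of the
β-expansion of `t` (0-based indexing). -/
noncomputable def betaDigit (β t : ℝ) (n : ℕ) : ℕ := (⌊β * betaR β t n⌋).toNat

/-- `g` is the generating sequence `g(β)` (with 0-based indexing,
`g i = g_{i+1}`): it equals the β-expansion `e(β)` of `1` if the latter is not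
eventually zero, and equals `(a₁ ⋯ a_{k-1} (a_k - 1))^∞` if
`e(β) = a₁ ⋯ a_k 0 0 ⋯` with `a_k ≠ 0`. -/
def IsGenSeq (β : ℝ) (g : ℕ → ℕ) : Prop :=
  ((¬ ∃ N : ℕ, ∀ n ≥ N, betaDigit β 1 n = 0) ∧ g = betaDigit β 1) ∨
  (∃ k : ℕ, betaDigit β 1 k ≠ 0 ∧ (∀ n > k, betaDigit β 1 n = 0) ∧
    ∀ n : ℕ, g n = if n % (k + 1) = k then betaDigit β 1 k - 1
      else betaDigit β 1 (n % (k + 1)))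

/-- The words `xₙ(t) x_{n+1}(t) ⋯ x_m(t)` (`t ∈ [0,1]`, `1 ≤ n ≤ m`) of the
beta-shift. -/
def betaWords (β : ℝ) : Set (List ℕ) :=
  {w | ∃ t ∈ Set.Icc (0 : ℝ) 1, ∃ n₀ m : ℕ,
    w = List.ofFn fun j : Fin m => betaDigit β t (n₀ + (j : ℕ))}

/-- The beta-shift `X_β`: the shift space whose language is `betaWords β`. -/
def betaShift (β : ℝ) : Set Seq := {x | ∀ (i : ℤ) (m : ℕ), wordAt x i m ∈ betaWords β}

/-! ### One-sided sequences in lexicographic order -/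

lemma toLex_le_toLex_iff {ι : Type*} {α : ι → Type*} [LinearOrder ι] [WellFoundedLT ι]
    [∀ i, LinearOrder (α i)] {u v : ∀ i, α i} :
    toLex u ≤ toLex v ↔ ∀ q, (∀ k < q, u k = v k) → u q ≤ v q := by
  rw [← not_lt]
  change (¬∃ q, (∀ k < q, v k = u k) ∧ v q < u q) ↔ _
  simp only [not_exists, not_and, not_lt, eq_comm]

/-- The one-sided sequence `u` with its first `k` letters removed. -/
def dropSeq (k : ℕ) (u : ℕ → ℕ) : ℕ → ℕ := fun i => u (k + i)

@[simp] lemma dropSeq_apply (k : ℕ) (u : ℕ → ℕ) (i : ℕ) : dropSeq k u i = u (k + i) := rfl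

@[simp] lemma dropSeq_zero (u : ℕ → ℕ) : dropSeq 0 u = u := by
  funext i; simp

lemma dropSeq_dropSeq (j k : ℕ) (u : ℕ → ℕ) : dropSeq j (dropSeq k u) = dropSeq (k + j) u := by
  funext i; simp [add_assoc]

/-- Every tail of the one-sided sequence `u` is lexicographically at most `g`. By Parry's theorem
this is the admissibility condition of beta-shifts; `TailsLE g g` says that `g` is the greatest of
its own tails. -/
def TailsLE (u g : ℕ → ℕ) : Prop := ∀ k, toLex (dropSeq k u) ≤ toLex g

namespace TailsLE

variable {u g : ℕ → ℕ}

lemma toLex_le (h : TailsLE u g) : toLex u ≤ toLex g := by simpa using h 0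

protected lemma dropSeq (h : TailsLE u g) (k : ℕ) : TailsLE (dropSeq k u) g := fun j => by
  rw [dropSeq_dropSeq]; exact h _

lemma apply_le (h : TailsLE u g) (k : ℕ) : u k ≤ g 0 := by
  simpa using toLex_le_toLex_iff.1 (h k) 0

end TailsLE

/-! ### The coding of a one-sided sequence `u` by `1^{u 0} 0 1^{u 1} 0 ⋯` -/

/-- The sequence of exponents that is left after the first letter of `1^{u 0} 0 1^{u 1} 0 ⋯` has
been read. -/
def unaryStep (u : ℕ → ℕ) : ℕ → ℕ :=
  if u 0 = 0 then dropSeq 1 u else Function.update u 0 (u 0 - 1)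

/-- The sequence `1^{u 0} 0 1^{u 1} 0 ⋯`. -/
def unary (u : ℕ → ℕ) (m : ℕ) : ℕ := if (unaryStep^[m] u) 0 = 0 then 0 else 1

section Unary

variable {u v g : ℕ → ℕ}

lemma unaryStep_of_eq_zero (h : u 0 = 0) : unaryStep u = dropSeq 1 u := if_pos h

lemma unaryStep_of_ne_zero (h : u 0 ≠ 0) : unaryStep u = Function.update u 0 (u 0 - 1) := if_neg h

lemma unary_zero (u : ℕ → ℕ) : unary u 0 = if u 0 = 0 then 0 else 1 := rfl

lemma unary_succ (u : ℕ → ℕ) (m : ℕ) : unary u (m + 1) = unary (unaryStep u) m := rfl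

lemma unary_le_one (u : ℕ → ℕ) (m : ℕ) : unary u m ≤ 1 := by
  unfold unary; split_ifs <;> simp

lemma dropSeq_unary (m : ℕ) (u : ℕ → ℕ) : dropSeq m (unary u) = unary (unaryStep^[m] u) := by
  funext s
  simp only [dropSeq, unary, ← Function.iterate_add_apply, Nat.add_comm m s]

lemma unary_of_lt {i : ℕ} (h : i < u 0) : unary u i = 1 := by
  induction i generalizing u with
  | zero => simp [unary_zero, h.ne']
  | succ i ih =>
    rw [unary_succ, unaryStep_of_ne_zero (Nat.ne_zero_of_lt h)]
    exact ih (by rw [Function.update_self]; omega)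

lemma iterate_unaryStep_head_add_one (u : ℕ → ℕ) : unaryStep^[u 0 + 1] u = dropSeq 1 u := by
  induction hn : u 0 generalizing u with
  | zero => exact unaryStep_of_eq_zero hn
  | succ n ih =>
    rw [Function.iterate_succ_apply, ih _ (by simp [unaryStep, hn])]
    funext i
    simp [unaryStep, hn]

lemma dropSeq_unary_head_add_one (u : ℕ → ℕ) :
    dropSeq (u 0 + 1) (unary u) = unary (dropSeq 1 u) := by
  rw [dropSeq_unary, iterate_unaryStep_head_add_one]

lemma unary_head (u : ℕ → ℕ) : unary u (u 0) = 0 := by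
  induction hn : u 0 generalizing u with
  | zero => simp [unary_zero, hn]
  | succ n ih => exact ih (unaryStep u) (by simp [unaryStep, hn])

lemma head_eq_of_unary_eq (h : unary u = unary v) : u 0 = v 0 := by
  by_contra hne
  rcases lt_or_gt_of_ne hne with hlt | hlt
  · have := h ▸ unary_head u
    simp [unary_of_lt hlt] at this
  · have := h ▸ unary_head v
    simp [unary_of_lt hlt] at this

lemma unary_injective : Function.Injective unary := by
  intro u v h
  funext n
  induction n generalizing u v with
  | zero => exact head_eq_of_unary_eq h
  | succ n ih =>
    have htail : unary (dropSeq 1 u) = unary (dropSeq 1 v) := by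
      rw [← dropSeq_unary_head_add_one, ← dropSeq_unary_head_add_one, h, head_eq_of_unary_eq h]
    simpa [Nat.add_comm] using ih htail

lemma toLex_unaryStep_le (h : toLex u ≤ toLex v) (h0 : u 0 = 0 ↔ v 0 = 0) :
    toLex (unaryStep u) ≤ toLex (unaryStep v) := by
  rw [toLex_le_toLex_iff] at h ⊢
  intro q hq
  by_cases hu : u 0 = 0
  · have hv := h0.1 hu
    rw [unaryStep_of_eq_zero hu, unaryStep_of_eq_zero hv] at hq ⊢
    refine h (1 + q) fun k hk => ?_
    rcases k with _ | k
    · rw [hu, hv]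
    · simpa [Nat.add_comm] using hq k (by omega)
  · have hv := mt h0.2 hu
    rw [unaryStep_of_ne_zero hu, unaryStep_of_ne_zero hv] at hq ⊢
    rcases q with _ | q
    · simpa using Nat.sub_le_sub_right (h 0 (by simp)) 1
    · simp only [Function.update_of_ne (Nat.succ_ne_zero q)]
      refine h (q + 1) fun k hk => ?_
      have hqk := hq k hk
      rcases k with _ | k
      · simp only [Function.update_self] at hqk
        omega
      · simpa using hqk

lemma toLex_unary_mono (h : toLex u ≤ toLex v) : toLex (unary u) ≤ toLex (unary v) := by
  rw [toLex_le_toLex_iff]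
  intro q hq
  induction q generalizing u v with
  | zero =>
    have h0 : u 0 ≤ v 0 := toLex_le_toLex_iff.1 h 0 (by simp)
    simp only [unary_zero]
    split_ifs <;> omega
  | succ q ih =>
    have h0 : u 0 = 0 ↔ v 0 = 0 := by
      have := hq 0 q.succ_pos
      simp only [unary_zero] at this
      split_ifs at this <;> simp_all
    exact ih (toLex_unaryStep_le h h0) fun k hk => hq (k + 1) (by omega)

lemma toLex_unary_le_iff : toLex (unary u) ≤ toLex (unary v) ↔ toLex u ≤ toLex v := by
  refine ⟨fun h => le_of_not_gt fun hlt => ?_, toLex_unary_mono⟩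
  have := unary_injective (toLex_inj.1 (h.antisymm (toLex_unary_mono hlt.le)))
  exact hlt.ne (by rw [this])

protected lemma TailsLE.unaryStep (h : TailsLE u g) : TailsLE (unaryStep u) g := by
  intro k
  by_cases hu : u 0 = 0
  · rw [unaryStep_of_eq_zero hu]
    exact h.dropSeq 1 k
  rw [unaryStep_of_ne_zero hu]
  rcases k with _ | k
  · rw [dropSeq_zero, toLex_le_toLex_iff]
    have h0 := h.apply_le 0
    rintro (_ | q) hq
    · simp only [Function.update_self]; omega
    · have := hq 0 q.succ_pos
      simp only [Function.update_self] at this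
      omega
  · have htail : dropSeq (k + 1) (Function.update u 0 (u 0 - 1)) =
        dropSeq (k + 1) u := by
      funext i
      simp
    rw [htail]
    exact h _

protected lemma TailsLE.unary (h : TailsLE u g) : TailsLE (unary u) (unary g) := by
  intro m
  have hiter : TailsLE (unaryStep^[m] u) g := by
    induction m with
    | zero => exact h
    | succ m ih => rw [Function.iterate_succ_apply']; exact ih.unaryStep
  rw [dropSeq_unary]
  exact toLex_unary_mono hiter.toLex_le

lemma exists_dropSeq_unary_eq (u : ℕ → ℕ) (j : ℕ) :
    ∃ m ≥ j, dropSeq m (unary u) = unary (dropSeq j u) := by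
  induction j with
  | zero => exact ⟨0, le_rfl, by simp⟩
  | succ j ih =>
    obtain ⟨m, hm, h⟩ := ih
    refine ⟨m + (u j + 1), by omega, ?_⟩
    rw [← dropSeq_dropSeq, h, ← dropSeq_dropSeq 1 j, ← dropSeq_unary_head_add_one]
    rfl

open Filter in
lemma frequently_unary_ne_zero (hg : ∃ᶠ k in atTop, g k ≠ 0) :
    ∃ᶠ k in atTop, unary g k ≠ 0 := by
  rw [frequently_atTop] at hg ⊢
  intro N
  obtain ⟨k, hk, hgk⟩ := hg N
  obtain ⟨m, hm, h⟩ := exists_dropSeq_unary_eq g k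
  refine ⟨m, hk.trans hm, ?_⟩
  have hm0 : unary g m = unary (dropSeq k g) 0 := congrFun h 0
  simpa [hm0, unary_zero] using hgk

end Unary

/-! ### Beta-shifts in terms of the lexicographic order -/

/-- The one-sided sequence read in `x` from position `i` on. -/
def rightTail (x : Seq) (i : ℤ) : ℕ → ℕ := fun k => x (i + k)

lemma dropSeq_rightTail (x : Seq) (i : ℤ) (k : ℕ) :
    dropSeq k (rightTail x i) = rightTail x (i + k) := by
  funext j
  simp [rightTail, add_assoc]

/-- The partial sum `∑_{k < m} u k / β ^ (k + 1)` of the value in base `β` of the digit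
sequence `u`. -/
noncomputable def partialValue (β : ℝ) (u : ℕ → ℕ) (m : ℕ) : ℝ :=
  ∑ k ∈ Finset.range m, (u k : ℝ) / β ^ (k + 1)

section PartialValue

variable {β t : ℝ} {u v : ℕ → ℕ}

@[simp] lemma partialValue_zero (β : ℝ) (u : ℕ → ℕ) : partialValue β u 0 = 0 :=
  Finset.sum_range_zero _

lemma partialValue_succ (β : ℝ) (u : ℕ → ℕ) (m : ℕ) :
    partialValue β u (m + 1) = partialValue β u m + (u m : ℝ) / β ^ (m + 1) :=
  Finset.sum_range_succ _ _

lemma partialValue_add (β : ℝ) (u : ℕ → ℕ) (q m : ℕ) :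
    partialValue β u (q + m) = partialValue β u q + partialValue β (dropSeq q u) m / β ^ q := by
  rw [partialValue, Finset.sum_range_add, partialValue, partialValue, Finset.sum_div]
  congr 1
  refine Finset.sum_congr rfl fun k _ => ?_
  rw [dropSeq_apply, div_div, ← pow_add, add_comm (k + 1) q, add_assoc]

lemma mul_partialValue_succ (hβ : β ≠ 0) (u : ℕ → ℕ) (m : ℕ) :
    β * partialValue β u (m + 1) = u 0 + partialValue β (dropSeq 1 u) m := by
  rw [Nat.add_comm m 1, partialValue_add, partialValue_succ, partialValue_zero]
  field_simp
  ring

lemma partialValue_congr {m : ℕ} (h : ∀ k < m, u k = v k) :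
    partialValue β u m = partialValue β v m :=
  Finset.sum_congr rfl fun k hk => by rw [h k (Finset.mem_range.1 hk)]

lemma partialValue_nonneg (hβ : 0 ≤ β) (u : ℕ → ℕ) (m : ℕ) : 0 ≤ partialValue β u m :=
  Finset.sum_nonneg fun k _ => by positivity

lemma partialValue_mono (hβ : 0 ≤ β) (u : ℕ → ℕ) : Monotone (partialValue β u) :=
  monotone_nat_of_le_succ fun m => by
    rw [partialValue_succ]
    exact le_add_of_nonneg_right (by positivity)

lemma partialValue_succ_add_le_of_lt (hβ : 0 ≤ β) {q : ℕ} (heq : ∀ k < q, u k = v k)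
    (hlt : u q < v q) :
    partialValue β u (q + 1) + 1 / β ^ (q + 1) ≤ partialValue β v (q + 1) := by
  have hdigit : (u q : ℝ) + 1 ≤ v q := by exact_mod_cast hlt
  rw [partialValue_succ, partialValue_succ, partialValue_congr heq, add_assoc, ← add_div]
  gcongr

lemma partialValue_add_remainder {r : ℕ → ℝ} (hβ : β ≠ 0)
    (hu : ∀ n, (u n : ℝ) = β * r n - r (n + 1)) (m : ℕ) :
    partialValue β u m + r m / β ^ m = r 0 := by
  induction m with
  | zero => simp
  | succ m ih =>
    rw [← ih, partialValue_succ, hu]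
    field_simp
    ring

lemma betaR_nonneg (ht : 0 ≤ t) : ∀ n, 0 ≤ betaR β t n
  | 0 => ht
  | _ + 1 => Int.fract_nonneg _

lemma cast_betaDigit (hβ : 0 ≤ β) (ht : 0 ≤ t) (n : ℕ) :
    (betaDigit β t n : ℝ) = β * betaR β t n - betaR β t (n + 1) := by
  have hfloor : 0 ≤ ⌊β * betaR β t n⌋ := Int.floor_nonneg.2 (mul_nonneg hβ (betaR_nonneg ht n))
  have hcast : (betaDigit β t n : ℝ) = ⌊β * betaR β t n⌋ := by
    exact_mod_cast Int.toNat_of_nonneg hfloor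
  rw [hcast, betaR, Int.self_sub_fract]

lemma partialValue_dropSeq_betaDigit_le (hβ : 0 < β) (ht : 0 ≤ t) (N m : ℕ) :
    partialValue β (dropSeq N (betaDigit β t)) m ≤ betaR β t N := by
  have htel : partialValue β (dropSeq N (betaDigit β t)) m + betaR β t (N + m) / β ^ m =
      betaR β t N :=
    partialValue_add_remainder (r := fun m => betaR β t (N + m)) hβ.ne'
      (fun n => cast_betaDigit hβ.le ht (N + n)) m
  have hrem : 0 ≤ betaR β t (N + m) / β ^ m := div_nonneg (betaR_nonneg ht _) (by positivity)
  linarith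

lemma betaR_partialValue (hβ : 0 < β) (hu : ∀ k m, partialValue β (dropSeq k u) m < 1)
    (j s : ℕ) : betaR β (partialValue β u (j + s)) j = partialValue β (dropSeq j u) s := by
  induction j generalizing s with
  | zero => simp [betaR]
  | succ j ih =>
    rw [betaR, Nat.add_right_comm j 1 s, Nat.add_assoc, ih, mul_partialValue_succ hβ.ne',
      Int.fract_natCast_add, dropSeq_dropSeq]
    exact Int.fract_eq_self.2 ⟨partialValue_nonneg hβ.le _ _, hu _ _⟩

lemma betaDigit_partialValue (hβ : 0 < β) (hu : ∀ k m, partialValue β (dropSeq k u) m < 1)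
    {j m : ℕ} (hj : j < m) : betaDigit β (partialValue β u m) j = u j := by
  obtain ⟨s, rfl⟩ := Nat.exists_eq_add_of_lt hj
  have hfloor : ⌊partialValue β (dropSeq (j + 1) u) s⌋ = 0 :=
    Int.floor_eq_zero_iff.2 ⟨partialValue_nonneg hβ.le _ _, hu _ _⟩
  rw [betaDigit, Nat.add_assoc, betaR_partialValue hβ hu, mul_partialValue_succ hβ.ne',
    Int.floor_natCast_add, dropSeq_dropSeq, hfloor]
  simp

lemma mem_betaShift_iff_partialValue_lt_one (hβ : 0 < β) {x : Seq} :
    x ∈ betaShift β ↔ ∀ i m, partialValue β (rightTail x i) m < 1 := by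
  constructor
  · intro hx i m
    -- The word is read one position early: `betaR β t (n₀ + 1) < 1`, but `betaR β t 0 = t` may
    -- be `1`.
    obtain ⟨t, ht, n₀, m', hw⟩ := hx (i - 1) (m + 1)
    obtain rfl : m + 1 = m' := by simpa [wordAt] using congrArg List.length hw
    have hdigit : ∀ k < m, rightTail x i k = dropSeq (n₀ + 1) (betaDigit β t) k := by
      intro k hk
      have := congrFun (List.ofFn_injective hw) ⟨k + 1, by omega⟩
      simpa [rightTail, add_assoc, add_comm 1 k] using this
    rw [partialValue_congr hdigit]
    exact (partialValue_dropSeq_betaDigit_le hβ ht.1 _ _).trans_lt (Int.fract_lt_one _)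
  · intro hx i m
    refine ⟨partialValue β (rightTail x i) m, ⟨partialValue_nonneg hβ.le _ _, (hx i m).le⟩, 0, m,
      congrArg List.ofFn (funext fun j => ?_)⟩
    have htails : ∀ k s, partialValue β (dropSeq k (rightTail x i)) s < 1 := fun k s => by
      rw [dropSeq_rightTail]; exact hx _ _
    rw [Nat.zero_add, betaDigit_partialValue hβ htails j.2, rightTail]

end PartialValue

/-- The digit sequence `g` is an expansion of `1` in base `β` which is infinite and is the greatest
of its own tails. For `β > 1` it is the generating sequence of `X_β`. -/
structure IsExpansionOfOne (β : ℝ) (g : ℕ → ℕ) : Prop where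
  tailsLE : TailsLE g g
  frequently_ne_zero : ∃ᶠ k in Filter.atTop, g k ≠ 0
  hasSum : HasSum (fun k => (g k : ℝ) / β ^ (k + 1)) 1

namespace IsExpansionOfOne

variable {β : ℝ} {g u : ℕ → ℕ}

lemma partialValue_self_lt_one (hg : IsExpansionOfOne β g) (hβ : 0 < β) (m : ℕ) :
    partialValue β g m < 1 := by
  obtain ⟨k, hk, hne⟩ := Filter.frequently_atTop.1 hg.frequently_ne_zero m
  have hle : partialValue β g (k + 1) ≤ 1 :=
    sum_le_hasSum _ (fun i _ => by positivity) hg.hasSum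
  have hpos : 0 < (g k : ℝ) / β ^ (k + 1) := by positivity
  have hmono := partialValue_mono hβ.le g hk
  rw [partialValue_succ] at hle
  linarith

lemma partialValue_lt_one (hg : IsExpansionOfOne β g) (hβ : 0 < β) (hu : TailsLE u g) (m : ℕ) :
    partialValue β u m < 1 := by
  induction m using Nat.strong_induction_on generalizing u with
  | _ m ih =>
    by_cases heq : ∀ k < m, u k = g k
    · rw [partialValue_congr heq]
      exact hg.partialValue_self_lt_one hβ m
    obtain ⟨q, hq, hagree⟩ := WellFounded.has_min wellFounded_lt {k | k < m ∧ u k ≠ g k}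
      (by simpa [Set.Nonempty] using heq)
    replace hagree : ∀ k < q, u k = g k := fun k hk =>
      not_not.1 fun hne => hagree k ⟨hk.trans hq.1, hne⟩ hk
    have hlt : u q < g q := (toLex_le_toLex_iff.1 hu.toLex_le q hagree).lt_of_ne hq.2
    obtain ⟨s, rfl⟩ : ∃ s, m = q + 1 + s := Nat.exists_eq_add_of_le hq.1
    calc partialValue β u (q + 1 + s)
        = partialValue β u (q + 1) + partialValue β (dropSeq (q + 1) u) s / β ^ (q + 1) :=
          partialValue_add ..
      _ ≤ partialValue β u (q + 1) + 1 / β ^ (q + 1) := by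
          gcongr
          exact (ih s (by omega) (hu.dropSeq _)).le
      _ ≤ partialValue β g (q + 1) := partialValue_succ_add_le_of_lt hβ.le hagree hlt
      _ < 1 := hg.partialValue_self_lt_one hβ _

lemma one_le_partialValue_self_add (hg : IsExpansionOfOne β g) (hβ : 0 < β) (q : ℕ) :
    1 ≤ partialValue β g q + 1 / β ^ q := by
  have hlim : Filter.Tendsto (fun m => partialValue β g (m + q)) Filter.atTop (nhds 1) :=
    (Filter.tendsto_add_atTop_iff_nat q).2 hg.hasSum.tendsto_sum_nat
  refine le_of_tendsto' hlim fun m => ?_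
  rw [Nat.add_comm, partialValue_add]
  gcongr
  exact (hg.partialValue_lt_one hβ (hg.tailsLE.dropSeq q) m).le

/-- Parry's description of the beta-shift. -/
theorem mem_betaShift_iff (hg : IsExpansionOfOne β g) (hβ : 0 < β) {x : Seq} :
    x ∈ betaShift β ↔ ∀ i, toLex (rightTail x i) ≤ toLex g := by
  rw [mem_betaShift_iff_partialValue_lt_one hβ]
  refine ⟨fun hx i => toLex_le_toLex_iff.2 fun q hq => ?_, fun hx i m => ?_⟩
  · by_contra! hlt
    refine (hx i (q + 1)).not_ge ?_
    calc 1 ≤ partialValue β g (q + 1) + 1 / β ^ (q + 1) := hg.one_le_partialValue_self_add hβ _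
      _ ≤ partialValue β (rightTail x i) (q + 1) :=
          partialValue_succ_add_le_of_lt hβ.le (fun k hk => (hq k hk).symm) hlt
  · refine hg.partialValue_lt_one hβ (fun k => ?_) m
    rw [dropSeq_rightTail]
    exact hx _

end IsExpansionOfOne

/-! ### The quasi-greedy expansion of one -/

/-- Remainders of the quasi-greedy expansion of `t` in base `β`: they are chosen in `(0, 1]`, where
those of the `β`-expansion are chosen in `[0, 1)`. -/
noncomputable def quasiRem (β t : ℝ) : ℕ → ℝ
  | 0 => t
  | n + 1 => β * quasiRem β t n - (⌈β * quasiRem β t n⌉ - 1)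

/-- Digits of the quasi-greedy expansion of `t` in base `β`. -/
noncomputable def quasiDigit (β t : ℝ) (n : ℕ) : ℕ := (⌈β * quasiRem β t n⌉ - 1).toNat

section QuasiGreedy

variable {β s t : ℝ}

lemma quasiRem_mem_Ioc (ht : t ∈ Set.Ioc (0 : ℝ) 1) : ∀ n, quasiRem β t n ∈ Set.Ioc (0 : ℝ) 1
  | 0 => ht
  | n + 1 => by
    have hle := Int.le_ceil (β * quasiRem β t n)
    have hlt := Int.ceil_lt_add_one (β * quasiRem β t n)
    rw [quasiRem]
    constructor <;> linarith

lemma cast_quasiDigit (hβ : 0 < β) (ht : t ∈ Set.Ioc (0 : ℝ) 1) (n : ℕ) :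
    (quasiDigit β t n : ℝ) = β * quasiRem β t n - quasiRem β t (n + 1) := by
  have hceil : 0 < ⌈β * quasiRem β t n⌉ := Int.ceil_pos.2 (mul_pos hβ (quasiRem_mem_Ioc ht n).1)
  have hcast : (quasiDigit β t n : ℝ) = ⌈β * quasiRem β t n⌉ - 1 := by
    exact_mod_cast Int.toNat_of_nonneg (Int.le_sub_one_of_lt hceil)
  rw [hcast, quasiRem, sub_sub_cancel]

lemma quasiRem_add (β t : ℝ) (k n : ℕ) :
    quasiRem β t (k + n) = quasiRem β (quasiRem β t k) n := by
  induction n with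
  | zero => rfl
  | succ n ih => rw [← add_assoc, quasiRem, quasiRem, ih]

lemma dropSeq_quasiDigit (β t : ℝ) (k : ℕ) :
    dropSeq k (quasiDigit β t) = quasiDigit β (quasiRem β t k) := by
  funext n
  simp only [dropSeq_apply, quasiDigit, quasiRem_add]

lemma toLex_quasiDigit_mono (hβ : 0 < β) (hs : s ∈ Set.Ioc (0 : ℝ) 1) (ht : t ∈ Set.Ioc (0 : ℝ) 1)
    (hst : s ≤ t) : toLex (quasiDigit β s) ≤ toLex (quasiDigit β t) := by
  refine toLex_le_toLex_iff.2 fun q hq => ?_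
  have hrem : ∀ n ≤ q, quasiRem β s n ≤ quasiRem β t n := by
    intro n hn
    induction n with
    | zero => exact hst
    | succ n ih =>
      have hmul := mul_le_mul_of_nonneg_left (ih (by omega)) hβ.le
      have hdigit : (quasiDigit β s n : ℝ) = quasiDigit β t n := by rw [hq n hn]
      rw [cast_quasiDigit hβ hs, cast_quasiDigit hβ ht] at hdigit
      linarith
  have hmul := mul_le_mul_of_nonneg_left (hrem q le_rfl) hβ.le
  exact Int.toNat_le_toNat (sub_le_sub_right (Int.ceil_le_ceil hmul) 1)

lemma tailsLE_quasiDigit (hβ : 0 < β) : TailsLE (quasiDigit β 1) (quasiDigit β 1) := fun k => by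
  have hrem := quasiRem_mem_Ioc (β := β) (Set.right_mem_Ioc.2 one_pos) k
  rw [dropSeq_quasiDigit]
  exact toLex_quasiDigit_mono hβ hrem (Set.right_mem_Ioc.2 one_pos) hrem.2

lemma frequently_quasiDigit_ne_zero (hβ : 1 < β) (ht : t ∈ Set.Ioc (0 : ℝ) 1) :
    ∃ᶠ k in Filter.atTop, quasiDigit β t k ≠ 0 := by
  refine Filter.frequently_atTop.2 fun N => ?_
  by_contra! hzero
  have hgrow : ∀ s, quasiRem β t (N + s) = β ^ s * quasiRem β t N := by
    intro s
    induction s with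
    | zero => simp
    | succ s ih =>
      have hdigit := cast_quasiDigit (one_pos.trans hβ) ht (N + s)
      rw [hzero (N + s) (by omega), ih, Nat.cast_zero] at hdigit
      rw [← add_assoc, pow_succ]
      linarith
  obtain ⟨s, hs⟩ := pow_unbounded_of_one_lt (1 / quasiRem β t N) hβ
  rw [div_lt_iff₀ (quasiRem_mem_Ioc ht N).1, ← hgrow] at hs
  exact hs.not_ge (quasiRem_mem_Ioc ht (N + s)).2

lemma hasSum_quasiDigit (hβ : 1 < β) (ht : t ∈ Set.Ioc (0 : ℝ) 1) :
    HasSum (fun k => (quasiDigit β t k : ℝ) / β ^ (k + 1)) t := by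
  have hβ0 : 0 < β := one_pos.trans hβ
  rw [hasSum_iff_tendsto_nat_of_nonneg fun i => by positivity]
  have hrem : Filter.Tendsto (fun m => quasiRem β t m / β ^ m) Filter.atTop (nhds 0) := by
    refine squeeze_zero (fun m => div_nonneg (quasiRem_mem_Ioc ht m).1.le (by positivity))
      (fun m => div_le_div_of_nonneg_right (quasiRem_mem_Ioc ht m).2 (by positivity)) ?_
    simpa using tendsto_pow_atTop_nhds_zero_of_lt_one (inv_nonneg.2 hβ0.le)
      (inv_lt_one_of_one_lt₀ hβ)
  have hlim := hrem.const_sub t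
  rw [sub_zero] at hlim
  exact hlim.congr fun m => sub_eq_of_eq_add
    (partialValue_add_remainder hβ0.ne' (cast_quasiDigit hβ0 ht) m).symm

theorem isExpansionOfOne_quasiDigit (hβ : 1 < β) : IsExpansionOfOne β (quasiDigit β 1) where
  tailsLE := tailsLE_quasiDigit (one_pos.trans hβ)
  frequently_ne_zero := frequently_quasiDigit_ne_zero hβ (Set.right_mem_Ioc.2 one_pos)
  hasSum := hasSum_quasiDigit hβ (Set.right_mem_Ioc.2 one_pos)

end QuasiGreedy

/-! ### The base in which a given digit sequence expands one -/

section Base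

variable {g : ℕ → ℕ} {b : ℕ}

lemma cast_mul_pow_le (hb : ∀ k, g k ≤ b) {r s : ℝ} (hs : 0 ≤ s) (hsr : s ≤ r) (k : ℕ) :
    (g k : ℝ) * s ^ (k + 1) ≤ b * r ^ (k + 1) := by
  have := hb k
  gcongr

lemma summable_const_mul_pow_succ (c : ℝ) {r : ℝ} (hr : 0 ≤ r) (hr1 : r < 1) :
    Summable fun k : ℕ => c * r ^ (k + 1) :=
  ((summable_nat_add_iff 1).2 (summable_geometric_of_lt_one hr hr1)).mul_left c

lemma summable_cast_mul_pow_succ (hb : ∀ k, g k ≤ b) {s : ℝ} (hs : 0 ≤ s) (hs1 : s < 1) :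
    Summable fun k => (g k : ℝ) * s ^ (k + 1) :=
  (summable_const_mul_pow_succ b hs hs1).of_nonneg_of_le (fun k => by positivity)
    (cast_mul_pow_le hb hs le_rfl)

lemma continuousOn_tsum_cast_mul_pow_succ (hb : ∀ k, g k ≤ b) {r : ℝ} (hr1 : r < 1) :
    ContinuousOn (fun s : ℝ => ∑' k, (g k : ℝ) * s ^ (k + 1)) (Set.Icc 0 r) := by
  rcases lt_or_ge r 0 with hr | hr
  · simp [Set.Icc_eq_empty_of_lt hr]
  refine continuousOn_tsum (fun k => by fun_prop) (summable_const_mul_pow_succ b hr hr1) ?_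
  intro k s hs
  have hs0 := hs.1
  rw [Real.norm_of_nonneg (by positivity)]
  exact cast_mul_pow_le hb hs.1 hs.2 k

lemma tsum_cast_mul_inv_pow_succ_lt_one (hb : ∀ k, g k ≤ b) {z : ℕ} (hz : g z < b) :
    ∑' k, (g k : ℝ) * ((b + 1 : ℝ)⁻¹) ^ (k + 1) < 1 := by
  have hb0 : (0 : ℝ) < b := by exact_mod_cast Nat.zero_lt_of_lt hz
  have hs : (0 : ℝ) < (b + 1 : ℝ)⁻¹ := by positivity
  have hs1 : (b + 1 : ℝ)⁻¹ < 1 := inv_lt_one_of_one_lt₀ (by linarith)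
  have hgeom : ∑' k : ℕ, (b : ℝ) * ((b + 1 : ℝ)⁻¹) ^ (k + 1) = 1 := by
    simp_rw [pow_succ', ← mul_assoc]
    rw [tsum_mul_left, tsum_geometric_of_lt_one hs.le hs1]
    field_simp
    rw [add_sub_cancel_right, div_self hb0.ne']
  refine lt_of_lt_of_eq ?_ hgeom
  refine Summable.tsum_lt_tsum (i := z) (cast_mul_pow_le hb hs.le le_rfl) ?_
    (summable_cast_mul_pow_succ hb hs.le hs1) (summable_const_mul_pow_succ _ hs.le hs1)
  gcongr

lemma exists_one_lt_tsum_cast_mul_pow_succ (hb : ∀ k, g k ≤ b)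
    (hg : ∃ᶠ k in Filter.atTop, g k ≠ 0) {c : ℝ} (hc : 0 ≤ c) (hc1 : c < 1) :
    ∃ r ∈ Set.Ioo c 1, 1 < ∑' k, (g k : ℝ) * r ^ (k + 1) := by
  obtain ⟨k, -, hk⟩ := Filter.frequently_atTop.1 hg 0
  obtain ⟨l, hkl, hl⟩ := Filter.frequently_atTop.1 hg (k + 1)
  have hcont : Continuous fun s : ℝ => s ^ (k + 1) + s ^ (l + 1) := by fun_prop
  have hnear : ∀ᶠ s in nhdsWithin (1 : ℝ) (Set.Iio 1), 1 < s ^ (k + 1) + s ^ (l + 1) :=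
    (hcont.continuousAt.tendsto.mono_left nhdsWithin_le_nhds).eventually
      (lt_mem_nhds (by norm_num))
  obtain ⟨r, hr, hrc⟩ := (hnear.and (Ioo_mem_nhdsLT hc1)).exists
  have hr0 : 0 ≤ r := hc.trans hrc.1.le
  have hpow : ∀ i, g i ≠ 0 → r ^ (i + 1) ≤ g i * r ^ (i + 1) := fun i hi =>
    le_mul_of_one_le_left (by positivity) (by exact_mod_cast Nat.one_le_iff_ne_zero.2 hi)
  refine ⟨r, hrc, ?_⟩
  calc 1 < r ^ (k + 1) + r ^ (l + 1) := hr
    _ ≤ g k * r ^ (k + 1) + g l * r ^ (l + 1) := add_le_add (hpow k hk) (hpow l hl)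
    _ = ∑ i ∈ {k, l}, (g i : ℝ) * r ^ (i + 1) := by rw [Finset.sum_pair (Nat.ne_of_lt hkl)]
    _ ≤ ∑' i, (g i : ℝ) * r ^ (i + 1) :=
      (summable_cast_mul_pow_succ hb hr0 hrc.2).sum_le_tsum _ fun i _ => by positivity

theorem exists_base_hasSum_one (hb : ∀ k, g k ≤ b) {z : ℕ} (hz : g z < b)
    (hg : ∃ᶠ k in Filter.atTop, g k ≠ 0) :
    ∃ β : ℝ, 1 < β ∧ β < b + 1 ∧ HasSum (fun k => (g k : ℝ) / β ^ (k + 1)) 1 := by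
  have hb0 : (0 : ℝ) < b := by exact_mod_cast Nat.zero_lt_of_lt hz
  have hc : (0 : ℝ) < (b + 1 : ℝ)⁻¹ := by positivity
  obtain ⟨r, hr, hgr⟩ := exists_one_lt_tsum_cast_mul_pow_succ hb hg hc.le
    (inv_lt_one_of_one_lt₀ (by linarith))
  obtain ⟨s, hs, hgs⟩ := intermediate_value_Ioo hr.1.le
    ((continuousOn_tsum_cast_mul_pow_succ hb hr.2).mono (Set.Icc_subset_Icc_left hc.le))
    ⟨tsum_cast_mul_inv_pow_succ_lt_one hb hz, hgr⟩
  have hs0 : 0 < s := hc.trans hs.1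
  have hs1 : s < 1 := hs.2.trans hr.2
  refine ⟨s⁻¹, (one_lt_inv₀ hs0).2 hs1, inv_lt_of_inv_lt₀ (by positivity) hs.1, ?_⟩
  simpa [div_eq_mul_inv, hgs] using (summable_cast_mul_pow_succ hb hs0.le hs1).hasSum

end Base

/-! ### Sequences of integers indexed by the integers -/

section IntSequences

variable {p q : ℤ → ℤ}

lemma exists_forall_succ_eq_add {G : Type*} [AddCommGroup G] (d : ℤ → G) (a : G) :
    ∃ p : ℤ → G, p 0 = a ∧ ∀ k, p (k + 1) = p k + d k := by
  refine ⟨fun k => a + ∑ i ∈ Finset.Ico 0 k, d i - ∑ i ∈ Finset.Ico k 0, d i, by simp,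
    fun k => ?_⟩
  beta_reduce
  rcases le_or_gt 0 k with hk | hk
  · rw [← Finset.insert_Ico_right_eq_Ico_add_one hk, Finset.sum_insert (by simp),
      Finset.Ico_eq_empty_of_le hk, Finset.Ico_eq_empty_of_le (hk.trans (Int.le_add_one le_rfl)),
      Finset.sum_empty]
    abel
  · rw [← Finset.insert_Ico_add_one_left_eq_Ico hk, Finset.sum_insert (by simp),
      Finset.Ico_eq_empty_of_le hk.le, Finset.Ico_eq_empty_of_le (Int.add_one_le_iff.2 hk),
      Finset.sum_empty]
    abel

lemma abs_sub_apply_zero_le {C : ℤ} (hp : ∀ k, |p (k + 1) - p k| ≤ C) (k : ℤ) :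
    |p k - p 0| ≤ C * |k| := by
  induction k with
  | zero => simp
  | succ k ih =>
    have htri := abs_sub_le (p (k + 1)) (p k) (p 0)
    have habs : |(k : ℤ) + 1| = |(k : ℤ)| + 1 := by
      rw [abs_of_nonneg (by positivity), abs_of_nonneg (by positivity)]
    rw [habs, mul_add_one]
    linarith [hp k]
  | pred k ih =>
    have htri := abs_sub_le (p (-k - 1)) (p (-k)) (p 0)
    have hstep := hp (-k - 1)
    rw [sub_add_cancel, abs_sub_comm] at hstep
    have habs : |-(k : ℤ) - 1| = |-(k : ℤ)| + 1 := by
      rw [abs_of_nonpos (by omega), abs_of_nonpos (by omega)]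
      ring
    rw [habs, mul_add_one]
    linarith

lemma monotone_apply_sub_of_strictMono (hp : StrictMono p) : Monotone fun k => p k - k :=
  monotone_int_of_le_succ fun k => by
    have : p k < p (k + 1) := hp (Int.lt_succ k)
    omega

lemma existsUnique_block (hp : StrictMono p) (m : ℤ) : ∃! k, p k ≤ m ∧ m < p (k + 1) := by
  have hmono : ∀ {k l}, k ≤ l → p k - k ≤ p l - l := fun h => monotone_apply_sub_of_strictMono hp h
  obtain ⟨k, hk, hmax⟩ := Int.exists_greatest_of_bdd (P := fun k => p k ≤ m)
    ⟨max 0 (m - p 0), fun k hk => by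
      by_contra! hlt
      have := hmono ((le_max_left _ _).trans hlt.le)
      omega⟩
    ⟨min 0 (m - p 0), by have := hmono (min_le_left 0 (m - p 0)); omega⟩
  refine ⟨k, ⟨hk, lt_of_not_ge fun h => by have := hmax _ h; omega⟩, fun l ⟨hl, hl'⟩ => ?_⟩
  have := hp.lt_iff_lt.1 (hk.trans_lt hl')
  have := hmax l hl
  omega

lemma exists_blockwise {α : Type*} (hp : StrictMono p) (F : ℤ → ℕ → α) :
    ∃ y : ℤ → α, ∀ k (i : ℕ), p k + i < p (k + 1) → y (p k + i) = F k i := by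
  choose b _ hunique using existsUnique_block hp
  refine ⟨fun m => F (b m) (m - p (b m)).toNat, fun k i hi => ?_⟩
  have hk : k = b (p k + i) := hunique _ k ⟨by omega, hi⟩
  simp [← hk]

lemma isGreatest_range_of_block (hp : StrictMono p) {k m : ℤ} (hk : p k ≤ m) (hm : m < p (k + 1)) :
    IsGreatest (Set.range p ∩ Set.Iic m) (p k) := by
  refine ⟨⟨⟨k, rfl⟩, hk⟩, ?_⟩
  rintro _ ⟨⟨l, rfl⟩, hl⟩
  exact hp.monotone (Int.lt_add_one_iff.1 (hp.lt_iff_lt.1 (hl.trans_lt hm)))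

lemma isLeast_range_succ (hp : StrictMono p) (k : ℤ) :
    IsLeast (Set.range p ∩ Set.Ioi (p k)) (p (k + 1)) := by
  refine ⟨⟨⟨k + 1, rfl⟩, hp (Int.lt_succ k)⟩, ?_⟩
  rintro _ ⟨⟨l, rfl⟩, hl⟩
  exact hp.monotone (hp.lt_iff_lt.1 hl)

lemma eq_of_strictMono_of_range_eq (hp : StrictMono p) (hq : StrictMono q)
    (hrange : Set.range p = Set.range q) {m : ℤ} (hpm : p 0 ≤ m ∧ m < p 1)
    (hqm : q 0 ≤ m ∧ m < q 1) : p = q := by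
  funext k
  induction k with
  | zero =>
    have hgreatest := isGreatest_range_of_block hp (k := 0) hpm.1 hpm.2
    rw [hrange] at hgreatest
    exact hgreatest.unique (isGreatest_range_of_block hq (k := 0) hqm.1 hqm.2)
  | succ k ih =>
    have hleast := isLeast_range_succ hp k
    rw [hrange, ih] at hleast
    exact hleast.unique (isLeast_range_succ hq k)
  | pred k ih =>
    have hgreatest : ∀ {r : ℤ → ℤ}, StrictMono r →
        IsGreatest (Set.range r ∩ Set.Iic (r (-k) - 1)) (r (-k - 1)) := fun hr =>
      isGreatest_range_of_block hr (Int.le_sub_one_of_lt (hr (sub_one_lt _)))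
        (by rw [sub_add_cancel]; exact sub_one_lt _)
    have hpgreatest := hgreatest hp
    rw [hrange, ih] at hpgreatest
    exact hpgreatest.unique (hgreatest hq)

lemma exists_strictMono_range_eq {Z : Set ℤ} (hbelow : ¬BddBelow Z) (habove : ¬BddAbove Z) :
    ∃ p : ℤ → ℤ, StrictMono p ∧ Set.range p = Z := by
  classical
  rw [not_bddBelow_iff] at hbelow
  rw [not_bddAbove_iff] at habove
  have : Nonempty Z := let ⟨b, hb, _⟩ := habove 0; ⟨⟨b, hb⟩⟩
  have : NoMaxOrder Z := ⟨fun a => let ⟨b, hb, hab⟩ := habove a; ⟨⟨b, hb⟩, hab⟩⟩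
  have : NoMinOrder Z := ⟨fun a => let ⟨b, hb, hba⟩ := hbelow a; ⟨⟨b, hb⟩, hba⟩⟩
  let _ : SuccOrder Z := LinearLocallyFiniteOrder.succOrder Z
  let _ : PredOrder Z := LinearLocallyFiniteOrder.predOrder Z
  let e : Z ≃o ℤ := orderIsoIntOfLinearSuccPredArch
  refine ⟨fun k => e.symm k, fun _ _ h => e.symm.strictMono h, ?_⟩
  ext m
  exact ⟨fun ⟨k, hk⟩ => hk ▸ (e.symm k).2, fun hm => ⟨e ⟨m, hm⟩, by simp⟩⟩

end IntSequences

/-! ### Subshifts and words -/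

namespace IsSubshift

variable {A : Set ℕ} {X : Set Seq}

lemma finite (hX : IsSubshift A X) : A.Finite := hX.1

lemma isClosed (hX : IsSubshift A X) : IsClosed X := hX.2.1

lemma mem_iff_shift_mem (hX : IsSubshift A X) (x : Seq) : x ∈ X ↔ shift x ∈ X := hX.2.2.1 x

lemma apply_mem (hX : IsSubshift A X) {x : Seq} (hx : x ∈ X) (i : ℤ) : x i ∈ A := hX.2.2.2 x hx i

lemma isCompact (hX : IsSubshift A X) : IsCompact X :=
  (isCompact_univ_pi fun _ => hX.finite.isCompact).of_isClosed_subset hX.isClosed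
    fun _ hx i _ => hX.apply_mem hx i

end IsSubshift

lemma translate_mem_iff {X : Set Seq} (hX : ∀ x, x ∈ X ↔ shift x ∈ X) (x : Seq) (j : ℤ) :
    (fun i => x (i + j)) ∈ X ↔ x ∈ X := by
  have step : ∀ j : ℤ, (fun i => x (i + (j + 1))) ∈ X ↔ (fun i => x (i + j)) ∈ X := by
    intro j
    have hshift : shift (fun i => x (i + j)) = fun i => x (i + (j + 1)) := by
      funext i
      simp only [shift, add_assoc, add_comm 1 j]
    rw [hX (fun i => x (i + j)), hshift]
  induction j with
  | zero => simp
  | succ j ih => exact (step j).trans ih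
  | pred j ih => simpa only [sub_add_cancel, ih, iff_comm] using step (-(j : ℤ) - 1)

@[simp] lemma wordAt_zero (x : Seq) (m : ℤ) : wordAt x m 0 = [] := List.ofFn_zero

lemma wordAt_succ (x : Seq) (m : ℤ) (n : ℕ) : wordAt x m (n + 1) = x m :: wordAt x (m + 1) n := by
  simp [wordAt, List.ofFn_succ, add_assoc, add_comm (1 : ℤ)]

lemma wordAt_add (x : Seq) (m : ℤ) (n k : ℕ) :
    wordAt x m (n + k) = wordAt x m n ++ wordAt x (m + n) k := by
  induction n generalizing m with
  | zero => simp
  | succ n ih =>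
    rw [Nat.add_right_comm, wordAt_succ, ih, wordAt_succ, List.cons_append, Nat.cast_succ,
      add_assoc m 1, add_comm 1 (n : ℤ)]

lemma map_wordAt (f : ℕ → ℕ) (x : Seq) (m : ℤ) (n : ℕ) :
    (wordAt x m n).map f = wordAt (f ∘ x) m n := by
  simp only [wordAt, List.map_ofFn]
  rfl

lemma wordAt_translate (x : Seq) (j m : ℤ) (n : ℕ) :
    wordAt (fun i => x (i + j)) m n = wordAt x (m + j) n := by
  simp only [wordAt, add_right_comm]

lemma wordAt_eq_iff {x : Seq} {m : ℤ} {w : List ℕ} :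
    wordAt x m w.length = w ↔ ∀ i < w.length, x (m + (i : ℕ)) = w.getD i 0 := by
  rw [List.ext_getElem_iff]
  simp +contextual [wordAt]

/-! ### Substitutions on biinfinite sequences -/

/-- The biinfinite sequence `y` is the concatenation of the words `τ (x k)`, `k : ℤ`, where the word
`τ (x k)` starts at position `p k`. -/
structure IsSubstitution (τ : ℕ → List ℕ) (x y : Seq) (p : ℤ → ℤ) : Prop where
  position_succ : ∀ k, p (k + 1) = p k + (τ (x k)).length
  wordAt_position : ∀ k, wordAt y (p k) (τ (x k)).length = τ (x k)

namespace IsSubstitution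

variable {τ τ' : ℕ → List ℕ} {x y y' z : Seq} {p p' q : ℤ → ℤ}

lemma apply_position_add (h : IsSubstitution τ x y p) {k : ℤ} {i : ℕ}
    (hi : i < (τ (x k)).length) : y (p k + i) = (τ (x k)).getD i 0 :=
  wordAt_eq_iff.1 (h.wordAt_position k) i hi

lemma strictMono (h : IsSubstitution τ x y p) (hτ : ∀ a, τ a ≠ []) : StrictMono p :=
  strictMono_int_of_lt_succ fun k => by
    have := List.length_pos_iff.2 (hτ (x k))
    rw [h.position_succ]
    omega

lemma exists_eq_position_add (h : IsSubstitution τ x y p) (hτ : ∀ a, τ a ≠ []) (m : ℤ) :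
    ∃ k, ∃ i : ℕ, i < (τ (x k)).length ∧ m = p k + i := by
  obtain ⟨k, ⟨hk, hk'⟩, -⟩ := existsUnique_block (h.strictMono hτ) m
  rw [h.position_succ] at hk'
  exact ⟨k, (m - p k).toNat, by omega, by omega⟩

lemma position_unique (h : IsSubstitution τ x y p) (h' : IsSubstitution τ x y' p')
    (h0 : p 0 = p' 0) : p = p' := by
  funext k
  induction k with
  | zero => exact h0
  | succ k ih => rw [h.position_succ, h'.position_succ, ih]
  | pred k ih =>
    have hk := h.position_succ (-k - 1)
    have hk' := h'.position_succ (-k - 1)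
    rw [sub_add_cancel] at hk hk'
    omega

lemma unique (h : IsSubstitution τ x y p) (h' : IsSubstitution τ x y' p) (hτ : ∀ a, τ a ≠ []) :
    y = y' := by
  funext m
  obtain ⟨k, i, hi, rfl⟩ := h.exists_eq_position_add hτ m
  rw [h.apply_position_add hi, h'.apply_position_add hi]

lemma translate (h : IsSubstitution τ x y p) (j : ℤ) :
    IsSubstitution τ x (fun i => y (i + j)) (fun k => p k - j) where
  position_succ k := by rw [h.position_succ]; ring
  wordAt_position k := by rw [wordAt_translate, sub_add_cancel, h.wordAt_position]

lemma reindex (h : IsSubstitution τ x y p) (j : ℤ) :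
    IsSubstitution τ (fun i => x (i + j)) y (fun i => p (i + j)) where
  position_succ k := by rw [← h.position_succ, add_right_comm]
  wordAt_position k := h.wordAt_position (k + j)

lemma map (h : IsSubstitution τ x y p) (f : ℕ → ℕ) :
    IsSubstitution (fun a => (τ a).map f) x (f ∘ y) p where
  position_succ k := by rw [h.position_succ, List.length_map]
  wordAt_position k := by rw [List.length_map, ← map_wordAt, h.wordAt_position]

lemma wordAt_flatMap (h : IsSubstitution τ y z q) (m : ℤ) (n : ℕ) :
    q (m + n) = q m + ((wordAt y m n).flatMap τ).length ∧
      wordAt z (q m) ((wordAt y m n).flatMap τ).length = (wordAt y m n).flatMap τ := by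
  induction n generalizing m with
  | zero => simp
  | succ n ih =>
    obtain ⟨hpos, hword⟩ := ih (m + 1)
    rw [h.position_succ] at hpos hword
    rw [wordAt_succ, List.flatMap_cons, List.length_append, wordAt_add, h.wordAt_position, hword]
    refine ⟨?_, rfl⟩
    push_cast
    rw [← add_assoc (q m), ← hpos, add_assoc, add_comm 1 (n : ℤ)]

lemma comp (h : IsSubstitution τ x y p) (h' : IsSubstitution τ' y z q) :
    IsSubstitution (fun a => (τ a).flatMap τ') x z (q ∘ p) where
  position_succ k := by
    rw [Function.comp_apply, Function.comp_apply, h.position_succ,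
      (h'.wordAt_flatMap _ _).1, h.wordAt_position]
  wordAt_position k := by
    have hword := (h'.wordAt_flatMap (p k) (τ (x k)).length).2
    rwa [h.wordAt_position] at hword

end IsSubstitution

lemma exists_isSubstitution {τ : ℕ → List ℕ} (hτ : ∀ a, τ a ≠ []) (x : Seq) (a : ℤ) :
    ∃ y p, p 0 = a ∧ IsSubstitution τ x y p := by
  obtain ⟨p, h0, hp⟩ := exists_forall_succ_eq_add (fun k => ((τ (x k)).length : ℤ)) a
  have hmono : StrictMono p := strictMono_int_of_lt_succ fun k => by
    have := List.length_pos_iff.2 (hτ (x k))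
    rw [hp]
    omega
  obtain ⟨y, hy⟩ := exists_blockwise hmono fun k i => (τ (x k)).getD i 0
  exact ⟨y, p, h0, hp, fun k => wordAt_eq_iff.2 fun i hi => hy k i (by rw [hp]; omega)⟩

/-- The image of `X` under the substitution `τ`: all concatenations of the words `τ (x k)` for
`x ∈ X`, at any position of the origin. -/
def substShift (X : Set Seq) (τ : ℕ → List ℕ) : Set Seq :=
  {y | ∃ x ∈ X, ∃ p, IsSubstitution τ x y p}

section SubstShift

variable {A : Set ℕ} {X : Set Seq} {τ τ' : ℕ → List ℕ}

lemma substShift_congr (h : ∀ x ∈ X, ∀ k, τ (x k) = τ' (x k)) :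
    substShift X τ = substShift X τ' := by
  ext y
  refine exists_congr fun x => and_congr_right fun hx => exists_congr fun p => ?_
  exact ⟨fun hp => ⟨by simpa only [h x hx] using hp.1, by simpa only [h x hx] using hp.2⟩,
    fun hp => ⟨by simpa only [h x hx] using hp.1, by simpa only [h x hx] using hp.2⟩⟩

lemma substShift_flatMap (hτ : ∀ a, τ a ≠ []) (hτ' : ∀ a, τ' a ≠ []) :
    substShift X (fun a => (τ a).flatMap τ') = substShift (substShift X τ) τ' := by
  ext z
  constructor
  · rintro ⟨x, hx, r, hr⟩
    obtain ⟨y, p, hp0, hp⟩ := exists_isSubstitution hτ x 0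
    obtain ⟨z', q, hq0, hq⟩ := exists_isSubstitution hτ' y (r 0)
    have hcomp := hp.comp hq
    obtain rfl := hcomp.position_unique hr (by rw [Function.comp_apply, hp0, hq0])
    obtain rfl : z' = z := hcomp.unique hr fun a => by
      obtain ⟨b, w, hw⟩ := List.exists_cons_of_ne_nil (hτ a)
      simp [hw, hτ' b]
    exact ⟨y, ⟨x, hx, p, hp⟩, q, hq⟩
  · rintro ⟨y, ⟨x, hx, p, hp⟩, q, hq⟩
    exact ⟨x, hx, q ∘ p, hp.comp hq⟩

lemma substShift_map (hτ : ∀ a, τ a ≠ []) (f : ℕ → ℕ) :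
    substShift X (fun a => (τ a).map f) = (fun y : Seq => f ∘ y) '' substShift X τ := by
  ext z
  constructor
  · rintro ⟨x, hx, p, hp⟩
    obtain ⟨y, q, hq0, hq⟩ := exists_isSubstitution hτ x (p 0)
    obtain rfl := (hq.map f).position_unique hp hq0
    exact ⟨y, ⟨x, hx, q, hq⟩, (hq.map f).unique hp fun a => by simp [hτ a]⟩
  · rintro ⟨y, ⟨x, hx, p, hp⟩, rfl⟩
    exact ⟨x, hx, p, hp.map f⟩

lemma exists_normalized_of_mem_substShift (hX : ∀ x, x ∈ X ↔ shift x ∈ X) (hτ : ∀ a, τ a ≠ [])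
    {y : Seq} (hy : y ∈ substShift X τ) :
    ∃ x ∈ X, ∃ p, (p 0 ≤ 0 ∧ 0 < p 1) ∧ IsSubstitution τ x y p := by
  obtain ⟨x, hx, p, hp⟩ := hy
  obtain ⟨j, ⟨hj, hj'⟩, -⟩ := existsUnique_block (hp.strictMono hτ) 0
  exact ⟨_, (translate_mem_iff hX x j).2 hx, _, ⟨by simpa using hj, by simpa [add_comm] using hj'⟩,
    hp.reindex j⟩

lemma mem_substShift_iff_shift_mem (y : Seq) : y ∈ substShift X τ ↔ shift y ∈ substShift X τ := by
  constructor
  · rintro ⟨x, hx, p, hp⟩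
    exact ⟨x, hx, _, hp.translate 1⟩
  · rintro ⟨x, hx, p, hp⟩
    refine ⟨x, hx, fun k => p k - -1, ?_⟩
    simpa only [shift, neg_add_cancel_right] using hp.translate (-1)

lemma isClosed_setOf_isSubstitution (τ : ℕ → List ℕ) :
    IsClosed {w : (Seq × (ℤ → ℤ)) × Seq | IsSubstitution τ w.1.1 w.2 w.1.2} := by
  have hletter (k : ℤ) : Continuous fun w : (Seq × (ℤ → ℤ)) × Seq => w.1.1 k := by fun_prop
  have hpos (k : ℤ) : Continuous fun w : (Seq × (ℤ → ℤ)) × Seq => w.1.2 k := by fun_prop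
  have heval : Continuous fun v : Seq × ℤ => v.1 v.2 :=
    continuous_prod_of_discrete_right.2 fun n => continuous_apply n
  have hlength (k : ℤ) : Continuous fun w : (Seq × (ℤ → ℤ)) × Seq => (τ (w.1.1 k)).length :=
    (continuous_of_discreteTopology (f := fun a => (τ a).length)).comp (hletter k)
  have hset : {w : (Seq × (ℤ → ℤ)) × Seq | IsSubstitution τ w.1.1 w.2 w.1.2} =
      (⋂ k : ℤ, {w | w.1.2 (k + 1) = w.1.2 k + ((τ (w.1.1 k)).length : ℤ)}) ∩
      ⋂ (k : ℤ) (i : ℕ), {w | i < (τ (w.1.1 k)).length →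
        w.2 (w.1.2 k + i) = (τ (w.1.1 k)).getD i 0} := by
    ext w
    simp only [Set.mem_inter_iff, Set.mem_iInter, Set.mem_ofPred_eq, ← wordAt_eq_iff]
    exact ⟨fun h => ⟨h.1, h.2⟩, fun h => ⟨h.1, h.2⟩⟩
  rw [hset]
  refine (isClosed_iInter fun k => isClosed_eq (hpos _) ((hpos k).add ?_)).inter
    (isClosed_iInter fun k => isClosed_iInter fun i => isClosed_imp ?_ (isClosed_eq ?_ ?_))
  · exact continuous_of_discreteTopology.comp (hlength k)
  · exact (isOpen_discrete (Set.Ioi i)).preimage (hlength k)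
  · exact heval.comp (continuous_snd.prodMk ((hpos k).add continuous_const))
  · exact (continuous_of_discreteTopology (f := fun a => (τ a).getD i 0)).comp (hletter k)

lemma IsSubstitution.position_mem_Icc {x y : Seq} {p : ℤ → ℤ} (h : IsSubstitution τ x y p)
    (h0 : p 0 ≤ 0) (h1 : 0 < p 1) {L : ℕ} (hL : ∀ k, (τ (x k)).length ≤ L) (k : ℤ) :
    p k ∈ Set.Icc (-(L * (|k| + 1) : ℤ)) (L * (|k| + 1)) := by
  have hstep : ∀ k, |p (k + 1) - p k| ≤ L := fun k => by
    rw [h.position_succ, add_sub_cancel_left, abs_of_nonneg (by positivity)]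
    exact_mod_cast hL k
  have hk := abs_le.1 (abs_sub_apply_zero_le hstep k)
  have hzero := abs_le.1 (hstep 0)
  rw [zero_add] at hzero
  rw [mul_add_one]
  constructor <;> linarith

/-- Normalized position sequences lie in a compact box, so `substShift X τ` is the projection of a
closed set along a compact factor. -/
lemma isClosed_substShift (hX : IsSubshift A X) (hτ : ∀ a, τ a ≠ []) :
    IsClosed (substShift X τ) := by
  obtain ⟨L, hL⟩ := (hX.finite.image fun a => (τ a).length).bddAbove
  let K : Set (Seq × (ℤ → ℤ)) :=
    X ×ˢ Set.univ.pi fun k => Set.Icc (-(L * (|k| + 1) : ℤ)) (L * (|k| + 1))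
  have hK : IsCompact K := hX.isCompact.prod (isCompact_univ_pi fun _ => isCompact_Icc)
  have : CompactSpace K := isCompact_iff_compactSpace.1 hK
  have hclosed : IsClosed {w : K × Seq | IsSubstitution τ w.1.1.1 w.2 w.1.1.2} :=
    (isClosed_setOf_isSubstitution τ).preimage
      (continuous_subtype_val.prodMap continuous_id)
  convert isClosedMap_snd_of_compactSpace _ hclosed
  ext y
  constructor
  · intro hy
    obtain ⟨x, hx, p, ⟨h0, h1⟩, hp⟩ :=
      exists_normalized_of_mem_substShift hX.mem_iff_shift_mem hτ hy
    have hlength : ∀ k, (τ (x k)).length ≤ L := fun k => hL ⟨_, hX.apply_mem hx k, rfl⟩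
    exact ⟨⟨⟨(x, p), hx, fun k _ => hp.position_mem_Icc h0 h1 hlength k⟩, y⟩, hp, rfl⟩
  · rintro ⟨w, hp, rfl⟩
    exact ⟨_, w.1.2.1, _, hp⟩

lemma isSubshift_substShift (hX : IsSubshift A X) (hτ : ∀ a, τ a ≠ []) :
    IsSubshift {b | ∃ a ∈ A, b ∈ τ a} (substShift X τ) := by
  refine ⟨?_, isClosed_substShift hX hτ, mem_substShift_iff_shift_mem, ?_⟩
  · have hset : {b | ∃ a ∈ A, b ∈ τ a} = ⋃ a ∈ A, {b | b ∈ τ a} := by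
      ext b
      simp
    rw [hset]
    exact hX.finite.biUnion fun a _ => (τ a).finite_toSet
  · rintro y ⟨x, hx, p, hp⟩ m
    obtain ⟨k, i, hi, rfl⟩ := hp.exists_eq_position_add hτ m
    refine ⟨x k, hX.apply_mem hx k, ?_⟩
    rw [hp.apply_position_add hi, List.getD_eq_getElem _ _ hi]
    exact List.getElem_mem hi

end SubstShift

/-! ### Flow equivalence of recognizable substitution images -/

section FlowEquivalence

variable {A : Set ℕ} {X : Set Seq} {τ : ℕ → List ℕ}

lemma continuous_comp_left (f : ℕ → ℕ) : Continuous fun x : Seq => f ∘ x :=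
  continuous_pi fun i => continuous_of_discreteTopology.comp (continuous_apply i)

lemma isSubshift_image_comp_left (hX : IsSubshift A X) (f : ℕ → ℕ) :
    IsSubshift (f '' A) ((fun x : Seq => f ∘ x) '' X) := by
  refine ⟨hX.finite.image f, (hX.isCompact.image (continuous_comp_left f)).isClosed,
    fun y => ⟨?_, ?_⟩, ?_⟩
  · rintro ⟨x, hx, rfl⟩
    exact ⟨shift x, (hX.mem_iff_shift_mem x).1 hx, rfl⟩
  · rintro ⟨x, hx, hxy⟩
    refine ⟨fun i => x (i + -1), (translate_mem_iff hX.mem_iff_shift_mem x (-1)).2 hx, ?_⟩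
    funext i
    simpa only [shift, Function.comp_apply, neg_add_cancel_right] using congrFun hxy (i + -1)
  · rintro _ ⟨x, hx, rfl⟩ i
    exact ⟨x i, hX.apply_mem hx i, rfl⟩

lemma flowEquiv_image_comp_left (hX : IsSubshift A X) {f : ℕ → ℕ}
    (hf : Set.InjOn (fun x : Seq => f ∘ x) X) :
    FlowEquiv X ((fun x : Seq => f ∘ x) '' X) := by
  have : CompactSpace X := isCompact_iff_compactSpace.1 hX.isCompact
  have hcont : Continuous (Equiv.Set.imageOfInjOn _ X hf) :=
    ((continuous_comp_left f).comp continuous_subtype_val).subtype_mk _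
  refine .of_conjugate ⟨A, hX⟩ ⟨_, isSubshift_image_comp_left hX f⟩
    ⟨hcont.homeoOfEquivCompactToT2, fun x y hxy => ?_⟩
  change shift (f ∘ x.1) = f ∘ y.1
  rw [← hxy]
  rfl

/-- The word by which the letter `b` is replaced in the symbol expansion `a ↦ a d`. -/
def expandWord (a d b : ℕ) : List ℕ := if b = a then [a, d] else [b]

lemma expandWord_ne_nil (a d b : ℕ) : expandWord a d b ≠ [] := by
  unfold expandWord
  split_ifs <;> exact List.cons_ne_nil _ _

lemma flatMap_expandWord_of_notMem {a : ℕ} {w : List ℕ} (ha : a ∉ w) (d : ℕ) :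
    w.flatMap (expandWord a d) = w := by
  induction w with
  | nil => rfl
  | cons b w ih =>
    rw [List.mem_cons, not_or] at ha
    rw [List.flatMap_cons, ih ha.2, expandWord, if_neg (Ne.symm ha.1), List.singleton_append]

lemma expandsTo_iff {a d : ℕ} {x y : Seq} :
    ExpandsTo a d x y ↔ ∃ p, (p 0 = 0 ∨ p 0 = -1) ∧ IsSubstitution (expandWord a d) x y p := by
  refine exists_congr fun p => and_congr_right fun _ => ⟨?_, fun h => ⟨?_, ?_, ?_⟩⟩
  · rintro ⟨hpos, hhead, hnew⟩
    constructor <;> intro k <;> by_cases hk : x k = a <;>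
      simp [expandWord, hk, hpos, wordAt_succ, hhead, hnew]
  · intro k
    rw [h.position_succ, expandWord]
    split_ifs <;> rfl
  · intro k
    have hword := h.wordAt_position k
    by_cases hk : x k = a <;> simp_all [expandWord, wordAt_succ]
  · intro k hk
    have hword := h.wordAt_position k
    simp_all [expandWord, wordAt_succ]

lemma symbolExpansion_eq_substShift (hX : ∀ x, x ∈ X ↔ shift x ∈ X) (a d : ℕ) :
    symbolExpansion X a d = substShift X (expandWord a d) := by
  ext y
  constructor
  · rintro ⟨x, hx, hy⟩
    obtain ⟨p, -, hp⟩ := expandsTo_iff.1 hy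
    exact ⟨x, hx, p, hp⟩
  · intro hy
    obtain ⟨x, hx, p, ⟨h0, h1⟩, hp⟩ :=
      exists_normalized_of_mem_substShift hX (expandWord_ne_nil a d) hy
    have hlength : (expandWord a d (x 0)).length ≤ 2 := by
      unfold expandWord
      split_ifs <;> simp
    have hp1 := hp.position_succ 0
    rw [zero_add] at hp1
    exact ⟨x, hx, expandsTo_iff.2 ⟨p, by omega, hp⟩⟩

lemma isSubstitution_singleton (x : Seq) : IsSubstitution (fun a => [a]) x x id where
  position_succ _ := rfl
  wordAt_position k := by simp [wordAt_succ]

lemma substShift_singleton (hX : ∀ x, x ∈ X ↔ shift x ∈ X) :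
    substShift X (fun a => [a]) = X := by
  ext y
  refine ⟨?_, fun hy => ⟨y, hy, id, isSubstitution_singleton y⟩⟩
  rintro ⟨x, hx, p, hp⟩
  have hx' := (isSubstitution_singleton x).translate (-p 0)
  rw [hx'.position_unique hp (by simp)] at hx'
  rw [← hx'.unique hp fun a => List.cons_ne_nil a []]
  exact (translate_mem_iff hX x _).2 hx

/-- The word `(j, 0) (j, 1) ⋯ (j, ℓ j)`, with pairs encoded by `Nat.pair`. The substitution
`towerWord ℓ` stacks `ℓ j + 1` distinct new letters over each letter `j`. -/
def towerWord (ℓ : ℕ → ℕ) (j : ℕ) : List ℕ := (List.range (ℓ j + 1)).map (Nat.pair j)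

lemma towerWord_ne_nil (ℓ : ℕ → ℕ) (j : ℕ) : towerWord ℓ j ≠ [] := by
  simp [towerWord]

lemma pair_mem_towerWord_iff {ℓ : ℕ → ℕ} {i j b : ℕ} :
    Nat.pair j i ∈ towerWord ℓ b ↔ b = j ∧ i ≤ ℓ b := by
  simp only [towerWord, List.mem_map, List.mem_range, Nat.pair_eq_pair, Nat.lt_succ_iff]
  exact ⟨fun ⟨_, hi, hb, h⟩ => ⟨hb, h ▸ hi⟩, fun ⟨hb, hi⟩ => ⟨i, hi, hb, rfl⟩⟩

lemma towerWord_flatMap_expandWord (ℓ : ℕ → ℕ) (j : ℕ) :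
    (fun b => (towerWord ℓ b).flatMap (expandWord (Nat.pair j (ℓ j)) (Nat.pair j (ℓ j + 1)))) =
      towerWord (Function.update ℓ j (ℓ j + 1)) := by
  funext b
  obtain rfl | hb := eq_or_ne b j
  · have hlast : Nat.pair b (ℓ b) ∉ (List.range (ℓ b)).map (Nat.pair b) := by
      simp [Nat.pair_eq_pair]
    simp only [towerWord, Function.update_self]
    rw [List.range_succ, List.map_append, List.flatMap_append, flatMap_expandWord_of_notMem hlast]
    simp [expandWord, List.range_succ]
  · rw [flatMap_expandWord_of_notMem fun h => hb (pair_mem_towerWord_iff.1 h).1, towerWord,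
      towerWord, Function.update_of_ne hb]

lemma flowEquiv_substShift_towerWord_update (hX : IsSubshift A X) (ℓ : ℕ → ℕ) {j : ℕ}
    (hj : j ∈ A) :
    FlowEquiv (substShift X (towerWord ℓ))
      (substShift X (towerWord (Function.update ℓ j (ℓ j + 1)))) := by
  rw [← towerWord_flatMap_expandWord,
    substShift_flatMap (towerWord_ne_nil ℓ) (expandWord_ne_nil _ _),
    ← symbolExpansion_eq_substShift mem_substShift_iff_shift_mem]
  refine .expand _ _ (isSubshift_substShift hX (towerWord_ne_nil ℓ))
    ⟨j, hj, pair_mem_towerWord_iff.2 ⟨rfl, le_rfl⟩⟩ ?_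
  rintro ⟨b, -, hb⟩
  obtain ⟨rfl, h⟩ := pair_mem_towerWord_iff.1 hb
  omega

lemma flowEquiv_substShift_towerWord_of_eq_zero (hX : IsSubshift A X) {ℓ : ℕ → ℕ}
    (hℓ : ∀ j ∈ A, ℓ j = 0) : FlowEquiv X (substShift X (towerWord ℓ)) := by
  have hsubst : substShift X (towerWord ℓ) = (fun x : Seq => (Nat.pair · 0) ∘ x) '' X := by
    rw [substShift_congr (τ' := fun a => [a].map (Nat.pair · 0)) fun x hx k => by
        simp [towerWord, hℓ _ (hX.apply_mem hx k)],
      substShift_map (fun a => List.cons_ne_nil a []), substShift_singleton hX.mem_iff_shift_mem]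
  rw [hsubst]
  have hinj : Function.Injective (Nat.pair · 0) := fun a b h => (Nat.pair_eq_pair.1 h).1
  exact flowEquiv_image_comp_left hX hinj.comp_left.injOn

theorem flowEquiv_substShift_towerWord (hX : IsSubshift A X) (ℓ : ℕ → ℕ) :
    FlowEquiv X (substShift X (towerWord ℓ)) := by
  induction hs : ∑ j ∈ hX.finite.toFinset, ℓ j generalizing ℓ with
  | zero =>
    exact flowEquiv_substShift_towerWord_of_eq_zero hX fun j hj =>
      Finset.sum_eq_zero_iff.1 hs j (hX.finite.mem_toFinset.2 hj)
  | succ s ih =>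
    obtain ⟨j, hj, hne⟩ := Finset.exists_ne_zero_of_sum_ne_zero (hs.trans_ne s.succ_ne_zero)
    let ℓ' := Function.update ℓ j (ℓ j - 1)
    have hℓ : Function.update ℓ' j (ℓ' j + 1) = ℓ := by
      simp only [ℓ']
      rw [Function.update_self, Function.update_idem, Nat.sub_add_cancel (Nat.pos_of_ne_zero hne),
        Function.update_eq_self]
    have hsum : ∑ i ∈ hX.finite.toFinset, ℓ' i = s := by
      have hsplit := Finset.sum_eq_add_sum_sdiff_singleton_of_mem hj ℓ
      rw [Finset.sum_update_of_mem hj]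
      omega
    have hstep := flowEquiv_substShift_towerWord_update hX ℓ' (hX.finite.mem_toFinset.1 hj)
    rw [hℓ] at hstep
    exact (ih ℓ' hsum).trans hstep

/-- The substitution `τ` is recognizable on `X`: a point of `substShift X τ` determines its
cutting positions and the point of `X` it comes from. The condition on `p 0` and `p 1` fixes the
indexing by letting block `0` cover the origin. -/
def IsRecognizableOn (τ : ℕ → List ℕ) (X : Set Seq) : Prop :=
  ∀ ⦃x x' y : Seq⦄ ⦃p p' : ℤ → ℤ⦄, x ∈ X → x' ∈ X →
    IsSubstitution τ x y p → (p 0 ≤ 0 ∧ 0 < p 1) →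
    IsSubstitution τ x' y p' → (p' 0 ≤ 0 ∧ 0 < p' 1) → x = x' ∧ p = p'

theorem flowEquiv_substShift (hX : IsSubshift A X) (hτ : ∀ a, τ a ≠ [])
    (hrec : IsRecognizableOn τ X) : FlowEquiv X (substShift X τ) := by
  let ℓ : ℕ → ℕ := fun j => (τ j).length - 1
  let f : ℕ → ℕ := fun m => (τ m.unpair.1).getD m.unpair.2 0
  have hmap : (fun j => (towerWord ℓ j).map f) = τ := by
    funext j
    have hlength : ℓ j + 1 = (τ j).length := Nat.sub_add_cancel (List.length_pos_iff.2 (hτ j))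
    refine List.ext_getElem (by simp [towerWord, hlength]) fun i _ hi => ?_
    simp [towerWord, f, hi]
  have hinj : Set.InjOn (fun y : Seq => f ∘ y) (substShift X (towerWord ℓ)) := by
    intro y hy y' hy' hyy'
    obtain ⟨x, hx, p, hp0, hp⟩ :=
      exists_normalized_of_mem_substShift hX.mem_iff_shift_mem (towerWord_ne_nil ℓ) hy
    obtain ⟨x', hx', p', hp0', hp'⟩ :=
      exists_normalized_of_mem_substShift hX.mem_iff_shift_mem (towerWord_ne_nil ℓ) hy'
    have hf := hp.map f
    have hf' := hp'.map f
    rw [hmap] at hf hf'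
    obtain ⟨rfl, rfl⟩ := hrec hx hx' hf hp0 ((show f ∘ y = f ∘ y' from hyy') ▸ hf') hp0'
    exact hp.unique hp' (towerWord_ne_nil ℓ)
  rw [← hmap, substShift_map (towerWord_ne_nil ℓ)]
  exact (flowEquiv_substShift_towerWord hX ℓ).trans
    (flowEquiv_image_comp_left (isSubshift_substShift hX (towerWord_ne_nil ℓ)) hinj)

end FlowEquivalence

/-! ### The substitution `j ↦ 1^j 0` -/

/-- The word `1^j 0`. The induced substitution is the biinfinite version of `unary`. -/
def unaryWord (j : ℕ) : List ℕ := List.replicate j 1 ++ [0]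

lemma length_unaryWord (j : ℕ) : (unaryWord j).length = j + 1 := by simp [unaryWord]

lemma unaryWord_ne_nil (j : ℕ) : unaryWord j ≠ [] := by simp [unaryWord]

lemma getD_unaryWord (i j : ℕ) : (unaryWord j).getD i 0 = if i < j then 1 else 0 := by
  split_ifs with h
  · rw [unaryWord, List.getD_append _ _ _ _ (by simpa using h), List.getD_replicate _ h]
  · rw [unaryWord, List.getD_append_right _ _ _ _ (by simpa using h)]
    cases i - (List.replicate j 1).length <;> rfl

section UnaryWord

variable {x y : Seq} {p : ℤ → ℤ}

lemma IsSubstitution.unaryWord_position_succ (h : IsSubstitution unaryWord x y p) (k : ℤ) :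
    p (k + 1) = p k + x k + 1 := by
  rw [h.position_succ, length_unaryWord, Nat.cast_succ, add_assoc]

lemma IsSubstitution.unaryWord_apply (h : IsSubstitution unaryWord x y p) {k : ℤ} {i : ℕ}
    (hi : i ≤ x k) : y (p k + i) = if i < x k then 1 else 0 := by
  rw [h.apply_position_add (by rw [length_unaryWord]; omega), getD_unaryWord]

lemma IsSubstitution.range_unaryWord_position (h : IsSubstitution unaryWord x y p) :
    Set.range p = {m | y (m - 1) = 0} := by
  ext m
  constructor
  · rintro ⟨k, rfl⟩
    have hsucc := h.unaryWord_position_succ (k - 1)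
    have hlast := h.unaryWord_apply (le_refl (x (k - 1)))
    rw [sub_add_cancel] at hsucc
    rw [if_neg (lt_irrefl _), ← add_sub_cancel_right (p (k - 1) + _) 1, ← hsucc] at hlast
    exact hlast
  · intro hm
    obtain ⟨k, i, hi, hki⟩ := h.exists_eq_position_add unaryWord_ne_nil (m - 1)
    rw [length_unaryWord, Nat.lt_succ_iff] at hi
    have hzero : y (m - 1) = 0 := hm
    rw [hki, h.unaryWord_apply hi] at hzero
    have hnlt : ¬i < x k := fun hlt => by simp [hlt] at hzero
    exact ⟨k + 1, by rw [h.unaryWord_position_succ]; omega⟩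

lemma isRecognizableOn_unaryWord (X : Set Seq) : IsRecognizableOn unaryWord X := by
  intro x x' y p p' _ _ h h0 h' h0'
  obtain rfl : p = p' :=
    eq_of_strictMono_of_range_eq (h.strictMono unaryWord_ne_nil) (h'.strictMono unaryWord_ne_nil)
      (h.range_unaryWord_position.trans h'.range_unaryWord_position.symm) h0 h0'
  refine ⟨funext fun k => ?_, rfl⟩
  have hk := h.unaryWord_position_succ k
  have hk' := h'.unaryWord_position_succ k
  omega

lemma isSubstitution_unaryWord_of_range_eq (hy : ∀ m, y m ≤ 1) (hp : StrictMono p)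
    (hrange : Set.range p = {m | y (m - 1) = 0}) :
    IsSubstitution unaryWord (fun k => (p (k + 1) - p k - 1).toNat) y p := by
  have hlt (k : ℤ) : p k < p (k + 1) := hp (Int.lt_succ k)
  refine ⟨fun k => ?_, fun k => wordAt_eq_iff.2 fun i hi => ?_⟩
  · have := hlt k
    rw [length_unaryWord]
    omega
  · rw [length_unaryWord] at hi
    have hk := hlt k
    rw [getD_unaryWord]
    split_ifs with hi'
    · have hne : y (p k + i) ≠ 0 := fun hzero => by
        have hmem : p k + i + 1 ∈ Set.range p := by
          rw [hrange]
          simpa using hzero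
        have := (isLeast_range_succ hp k).2 ⟨hmem, Set.mem_Ioi.2 (by omega)⟩
        omega
      have := hy (p k + i)
      omega
    · have hmem : p (k + 1) ∈ {m | y (m - 1) = 0} := hrange ▸ ⟨k + 1, rfl⟩
      have hlast : p k + i = p (k + 1) - 1 := by omega
      rw [hlast]
      exact hmem

lemma exists_isSubstitution_unaryWord (hy : ∀ m, y m ≤ 1) (hbelow : ∀ m, ∃ n < m, y n = 0)
    (habove : ∀ m, ∃ n > m, y n = 0) : ∃ x p, IsSubstitution unaryWord x y p := by
  obtain ⟨p, hp, hrange⟩ := exists_strictMono_range_eq (Z := {m | y (m - 1) = 0})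
    (not_bddBelow_iff.2 fun m =>
      let ⟨n, hn, hzero⟩ := hbelow (m - 1)
      ⟨n + 1, by simpa using hzero, by omega⟩)
    (not_bddAbove_iff.2 fun m =>
      let ⟨n, hn, hzero⟩ := habove m
      ⟨n + 1, by simpa using hzero, by omega⟩)
  exact ⟨_, p, isSubstitution_unaryWord_of_range_eq hy hp hrange⟩

lemma IsSubstitution.rightTail_unaryWord_position (h : IsSubstitution unaryWord x y p) (k : ℤ) :
    rightTail y (p k) = unary (rightTail x k) := by
  have hhead (k : ℤ) : rightTail x k 0 = x k := by simp [rightTail]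
  funext s
  induction s using Nat.strong_induction_on generalizing k with
  | _ s ih =>
    rcases lt_trichotomy s (x k) with hlt | rfl | hgt
    · rw [rightTail, h.unaryWord_apply hlt.le, if_pos hlt, unary_of_lt (by rwa [hhead])]
    · rw [rightTail, h.unaryWord_apply le_rfl, if_neg (lt_irrefl _)]
      exact hhead k ▸ (unary_head (rightTail x k)).symm
    · obtain ⟨t, rfl⟩ := Nat.exists_eq_add_of_lt hgt
      calc rightTail y (p k) (x k + t + 1)
          = rightTail y (p (k + 1)) t := by
            rw [h.unaryWord_position_succ, rightTail, rightTail]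
            push_cast
            ring_nf
        _ = unary (dropSeq 1 (rightTail x k)) t := by
            rw [ih t (by omega), dropSeq_rightTail, Nat.cast_one]
        _ = unary (rightTail x k) (x k + t + 1) := by
            rw [← dropSeq_unary_head_add_one, dropSeq_apply, hhead, Nat.add_right_comm]

end UnaryWord

/-! ### The image of a beta-shift under `j ↦ 1^j 0` -/

lemma betaDigit_le_floor {β t : ℝ} (hβ : 0 ≤ β) (ht : t ≤ 1) (n : ℕ) :
    betaDigit β t n ≤ ⌊β⌋₊ := by
  have hrem : betaR β t n ≤ 1 := by
    cases n with
    | zero => exact ht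
    | succ n => exact (Int.fract_lt_one _).le
  rw [betaDigit, Int.floor_toNat]
  exact Nat.floor_mono (mul_le_of_le_one_right hβ hrem)

lemma isSubshift_betaShift {β : ℝ} (hβ : 0 ≤ β) :
    IsSubshift (Set.Iic ⌊β⌋₊) (betaShift β) := by
  refine ⟨Set.finite_Iic _, ?_, fun x => ?_, fun x hx i => ?_⟩
  · simp only [betaShift, Set.ofPred_forall]
    refine isClosed_iInter fun i => isClosed_iInter fun m => ?_
    have hcont : Continuous fun (x : Seq) (k : Fin m) => x (i + (k.val : ℤ)) := by fun_prop
    exact (isClosed_discrete {v : Fin m → ℕ | List.ofFn v ∈ betaWords β}).preimage hcont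
  · have hword (i : ℤ) (m : ℕ) : wordAt (shift x) i m = wordAt x (i + 1) m :=
      wordAt_translate x 1 i m
    refine ⟨fun h i m => hword i m ▸ h (i + 1) m, fun h i m => ?_⟩
    rw [← sub_add_cancel i 1, ← hword]
    exact h (i - 1) m
  · obtain ⟨t, ht, n, m, hw⟩ := hx i 1
    obtain rfl : 1 = m := by simpa [wordAt] using congrArg List.length hw
    have hdigit : x i = betaDigit β t n := by simpa [wordAt] using hw
    rw [hdigit]
    exact betaDigit_le_floor hβ ht.2 n

lemma exists_le_head_eq_zero_of_toLex_le_unary {u g : ℕ → ℕ} (h : toLex u ≤ toLex (unary g)) :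
    ∃ i ≤ g 0, u i = 0 := by
  by_contra! hne
  rw [toLex_le_toLex_iff] at h
  have hone : ∀ i < g 0, u i = unary g i := by
    intro i
    induction i using Nat.strong_induction_on with
    | _ i ih =>
      intro hi
      have hle := h i fun k hk => ih k hk (hk.trans hi)
      have := hne i hi.le
      rw [unary_of_lt hi] at hle ⊢
      omega
  have hhead := h (g 0) hone
  rw [unary_head] at hhead
  exact hne (g 0) le_rfl (Nat.le_zero.1 hhead)

theorem substShift_betaShift_unaryWord {β β' : ℝ} (hβ : 0 < β) (hβ' : 0 < β') {g : ℕ → ℕ}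
    (hg : IsExpansionOfOne β g) (hg' : IsExpansionOfOne β' (unary g)) :
    substShift (betaShift β) unaryWord = betaShift β' := by
  ext y
  constructor
  · rintro ⟨x, hx, p, hp⟩
    rw [hg.mem_betaShift_iff hβ] at hx
    refine (hg'.mem_betaShift_iff hβ').2 fun m => ?_
    obtain ⟨k, i, -, rfl⟩ := hp.exists_eq_position_add unaryWord_ne_nil m
    have htails : TailsLE (rightTail x k) g := fun j => dropSeq_rightTail x k j ▸ hx _
    rw [← dropSeq_rightTail, hp.rightTail_unaryWord_position]
    exact htails.unary i
  · rw [hg'.mem_betaShift_iff hβ']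
    intro hy
    have hle : ∀ m, y m ≤ 1 := fun m => by
      have hhead : rightTail y m 0 ≤ unary g 0 := toLex_le_toLex_iff.1 (hy m) 0 (by simp)
      simpa [rightTail] using hhead.trans (unary_le_one g 0)
    have hzero : ∀ m, ∃ i ≤ g 0, y (m + (i : ℕ)) = 0 := fun m =>
      exists_le_head_eq_zero_of_toLex_le_unary (hy m)
    obtain ⟨x, p, hp⟩ := exists_isSubstitution_unaryWord hle
      (fun m => let ⟨i, hi, h⟩ := hzero (m - g 0 - 1); ⟨_, by omega, h⟩)
      (fun m => let ⟨i, _, h⟩ := hzero (m + 1); ⟨_, by omega, h⟩)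
    refine ⟨x, (hg.mem_betaShift_iff hβ).2 fun k => ?_, p, hp⟩
    rw [← toLex_unary_le_iff, ← hp.rightTail_unaryWord_position]
    exact hy _

/-- For every `β > 1` there exists `1 < β' < 2` such that the
beta-shifts `X_β` and `X_{β'}` are flow equivalent. -/
theorem statement13 (β : ℝ) (hβ : 1 < β) :
    ∃ β' : ℝ, 1 < β' ∧ β' < 2 ∧ FlowEquiv (betaShift β) (betaShift β') := by
  have hg := isExpansionOfOne_quasiDigit hβ
  have hfreq := frequently_unary_ne_zero hg.frequently_ne_zero
  have hzero : unary (quasiDigit β 1) (quasiDigit β 1 0) < 1 := by simp [unary_head]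
  obtain ⟨β', h1, h2, hsum⟩ := exists_base_hasSum_one (unary_le_one _) hzero hfreq
  have hg' : IsExpansionOfOne β' (unary (quasiDigit β 1)) := ⟨hg.tailsLE.unary, hfreq, hsum⟩
  have hβ0 : 0 < β := one_pos.trans hβ
  refine ⟨β', h1, by simpa [one_add_one_eq_two] using h2, ?_⟩
  rw [← substShift_betaShift_unaryWord hβ0 (one_pos.trans h1) hg hg']
  exact flowEquiv_substShift (isSubshift_betaShift hβ0.le) unaryWord_ne_nil
    (isRecognizableOn_unaryWord _)

end SymbolicDynamics
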